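/- Splitting of stable models over disjoint vocabularies: if programs Π₁ and Π₂ share no atoms, then I is a stable model of Π₁ ∪ Π₂ if and only if I ∩ A₁ is a stable model of Π₁ and I ∩ A₂ is a stable model of Π₂ and I ⊆ A₁ ∪ A₂, where Aᵢ is the set of atoms occurring in Πᵢ. -/

import Mathlib

/-- A ground normal rule: head atom, positive body atoms, negative body atoms. -/
structure Rule (α : Type*) where
  head : α
  pos : Set α
  neg : Set α

/-- Classical satisfaction of a rule by an interpretation. -/
def satRule {α : Type*} (I : Set α) (r : Rule α) : Prop :=
  (r.pos ⊆ I ∧ Disjoint r.neg I) → r.head ∈ I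

/-- Classical satisfaction of a program. -/
def satProg {α : Type*} (I : Set α) (P : Set (Rule α)) : Prop :=
  ∀ r ∈ P, satRule I r

/-- The (Gelfond–Lifschitz) reduct of a program w.r.t. an interpretation. -/
def reduct {α : Type*} (P : Set (Rule α)) (I : Set α) : Set (Rule α) :=
  {r' | ∃ r ∈ P, Disjoint r.neg I ∧ r' = ⟨r.head, r.pos, ∅⟩}

/-- ⟨H,T⟩ is a here-and-there model of P. -/
def isHT {α : Type*} (P : Set (Rule α)) (H T : Set α) : Prop :=
  H ⊆ T ∧ satProg T P ∧ satProg H (reduct P T)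

/-- I is a stable model of P. -/
def stable {α : Type*} (P : Set (Rule α)) (I : Set α) : Prop :=
  satProg I P ∧ ∀ J, J ⊂ I → ¬ satProg J (reduct P I)

/-- Atom a occurs in rule r. -/
def occursIn {α : Type*} (a : α) (r : Rule α) : Prop :=
  a = r.head ∨ a ∈ r.pos ∨ a ∈ r.neg

/-- The set of atoms occurring in a program. -/
def atomsOf {α : Type*} (P : Set (Rule α)) : Set α :=
  {a | ∃ r ∈ P, occursIn a r}

def GG {α : Type*} (P : Set (Rule α)) (I J : Set α) : Prop :=
  ∀ r ∈ P, Disjoint r.neg I → r.pos ⊆ J → r.head ∈ J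

theorem sat_reduct_iff {α : Type*} (P : Set (Rule α)) (I J : Set α) :
    satProg J (reduct P I) ↔ GG P I J := by
  constructor
  · intro h r hr hn hp
    exact h ⟨r.head, r.pos, ∅⟩ ⟨r, hr, hn, rfl⟩ ⟨hp, Set.empty_disjoint _⟩
  · rintro h _ ⟨r, hr, hn, rfl⟩ ⟨hp, _⟩
    exact h r hr hn hp

theorem stable_iff_GG {α : Type*} (P : Set (Rule α)) (I : Set α) :
    stable P I ↔ GG P I I ∧ ∀ J, J ⊆ I → GG P I J → I ⊆ J := by
  unfold stable
  simp only [sat_reduct_iff]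
  refine and_congr ⟨fun h r hr hn hp => h r hr ⟨hp, hn⟩, fun h r hr hh => h r hr hh.2 hh.1⟩ ?_
  constructor
  · intro h J hJ hG
    by_contra hc
    exact h J ⟨hJ, hc⟩ hG
  · intro h J hJ hG
    exact hJ.2 (h J hJ.1 hG)

theorem GG_congr {α : Type*} (P : Set (Rule α)) (I J I' J' : Set α)
    (hI : ∀ a ∈ atomsOf P, (a ∈ I ↔ a ∈ I')) (hJ : ∀ a ∈ atomsOf P, (a ∈ J ↔ a ∈ J'))
    (h : GG P I J) : GG P I' J' := by
  intro r hr hn hp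
  refine (hJ _ ⟨r, hr, Or.inl rfl⟩).1 (h r hr ?_ ?_)
  · rw [Set.disjoint_left] at hn ⊢
    exact fun a ha haI => hn ha ((hI a ⟨r, hr, Or.inr (Or.inr ha)⟩).1 haI)
  · exact fun a ha => (hJ a ⟨r, hr, Or.inr (Or.inl ha)⟩).2 (hp ha)

theorem GG_union {α : Type*} (P₁ P₂ : Set (Rule α)) (I J : Set α) :
    GG (P₁ ∪ P₂) I J ↔ GG P₁ I J ∧ GG P₂ I J :=
  ⟨fun h => ⟨fun r hr => h r (Or.inl hr), fun r hr => h r (Or.inr hr)⟩,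
    fun h r hr => hr.elim (h.1 r) (h.2 r)⟩

theorem half_split {α : Type*} (P₁ P₂ : Set (Rule α)) (I : Set α)
    (hdisj : Disjoint (atomsOf P₁) (atomsOf P₂)) (h : stable (P₁ ∪ P₂) I) :
    stable P₁ (I ∩ atomsOf P₁) := by
  rw [Set.disjoint_left] at hdisj
  rw [stable_iff_GG, GG_union] at h
  obtain ⟨⟨h1, h2⟩, hm⟩ := h
  rw [stable_iff_GG]
  refine ⟨GG_congr _ I I _ _ (by simp +contextual) (by simp +contextual) h1, ?_⟩
  intro J hJ hG
  have key := hm (J ∪ (I \ atomsOf P₁)) ?_ ((GG_union _ _ _ _).2 ⟨?_, ?_⟩)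
  · rintro a ⟨ha, hA⟩
    exact (key ha).elim id (fun h => absurd hA h.2)
  · rintro a (ha | ha)
    · exact (hJ ha).1
    · exact ha.1
  · exact GG_congr _ _ _ _ _ (by simp +contextual) (by simp +contextual) hG
  · refine GG_congr _ _ _ _ _ (fun _ _ => Iff.rfl) (fun a ha => ⟨fun h => Or.inr ⟨h, fun h' => hdisj h' ha⟩, ?_⟩) h2
    rintro (h | h)
    · exact (hJ h).1
    · exact h.1

theorem splitting_disjoint {α : Type*} (P₁ P₂ : Set (Rule α)) (I : Set α)
    (hdisj : Disjoint (atomsOf P₁) (atomsOf P₂)) :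
    stable (P₁ ∪ P₂) I ↔
      (stable P₁ (I ∩ atomsOf P₁) ∧ stable P₂ (I ∩ atomsOf P₂) ∧
       I ⊆ atomsOf P₁ ∪ atomsOf P₂) := by
  constructor
  · intro h
    refine ⟨half_split _ _ _ hdisj h, half_split P₂ P₁ I hdisj.symm (Set.union_comm P₁ P₂ ▸ h), ?_⟩
    rw [stable_iff_GG, GG_union] at h
    obtain ⟨⟨h1, h2⟩, hm⟩ := h
    refine (hm (I ∩ (atomsOf P₁ ∪ atomsOf P₂)) Set.inter_subset_left
      ((GG_union _ _ _ _).2 ⟨?_, ?_⟩)).trans Set.inter_subset_right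
    · exact GG_congr _ _ _ _ _ (fun _ _ => Iff.rfl) (by simp +contextual) h1
    · exact GG_congr _ _ _ _ _ (fun _ _ => Iff.rfl) (by simp +contextual) h2
  · rintro ⟨h1, h2, hI⟩
    rw [stable_iff_GG] at h1 h2
    rw [stable_iff_GG, GG_union]
    refine ⟨⟨GG_congr _ _ _ _ _ (by simp +contextual) (by simp +contextual) h1.1,
      GG_congr _ _ _ _ _ (by simp +contextual) (by simp +contextual) h2.1⟩, ?_⟩
    intro J hJ hG
    rw [GG_union] at hG
    have k1 := h1.2 (J ∩ atomsOf P₁) (Set.inter_subset_inter_left _ hJ)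
      (GG_congr _ _ _ _ _ (by simp +contextual) (by simp +contextual) hG.1)
    have k2 := h2.2 (J ∩ atomsOf P₂) (Set.inter_subset_inter_left _ hJ)
      (GG_congr _ _ _ _ _ (by simp +contextual) (by simp +contextual) hG.2)
    intro a ha
    rcases hI ha with h | h
    · exact (k1 ⟨ha, h⟩).1
    · exact (k2 ⟨ha, h⟩).1
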